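/- arXiv:2406.06916 — 3 statements merged into one kernel-verified Lean document; each statement's English description precedes it below -/
import Mathlib

section
/- (Velocity Lemma for the cut-off weight.) For every ξ = (ξ₁,ξ₂,ξ₃) ∈ ℝ³, every x ≥ 0 and every s ≥ 0 such that x − s(ξ₁+u) ≥ 0, one has e^{−2cν₀ s} · α(x − s(ξ₁+u), ξ) ≤ α(x,ξ) ≤ e^{2cν₀ s} · α(x − s(ξ₁+u), ξ). -/
noncomputable section

/-- The kinetic weight `α̃(x,ξ) = √((ξ₁+u)² + (cν₀)² x²)`. -/
def alphaTilde (u c ν₀ : ℝ) (x : ℝ) (ξ : EuclideanSpace ℝ (Fin 3)) : ℝ :=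
  Real.sqrt ((ξ 0 + u) ^ 2 + (c * ν₀) ^ 2 * x ^ 2)

/-!
Along the transport `x ↦ x + t (ξ₁ + u)` the quadratic form `α̃²` satisfies
`d/dt α̃² = 2 (cν₀)² x (ξ₁ + u) ≤ cν₀ α̃²` by the inequality `2ab ≤ a² + b²`, so by Grönwall `α̃`
grows at most by the factor `e^{cν₀s/2}`. A weight `χ` with `y χ'(y) ≤ p χ(y)` turns a factor `e^t`
in its argument into a factor `e^{pt}` in its value, again by Grönwall, now along `t ↦ χ(e^t a)`;
working with `e^t a` rather than with `log χ` leaves `α̃ = 0` harmless. The cut-off satisfies this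
growth condition with `p = 4`: where it is not constant, `y ≤ 2` and `χ' ≤ 1`, while `χ(y) = y`
on `[0, 1/2]` and `χ ≥ 1/2` beyond by monotonicity.
-/

open Real Set

lemma le_exp_mul_of_deriv_right_le_mul {g g' : ℝ → ℝ} {K a b : ℝ} (hab : a ≤ b)
    (hcont : ContinuousOn g (Icc a b))
    (hderiv : ∀ t ∈ Ico a b, HasDerivWithinAt g (g' t) (Ici t) t)
    (hbound : ∀ t ∈ Ico a b, g' t ≤ K * g t) :
    g b ≤ exp (K * (b - a)) * g a := by
  have hslope : ∀ t ∈ Ico a b, ∀ r, g' t < r →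
      ∃ᶠ z in nhdsWithin t (Ioi t), (z - t)⁻¹ * (g z - g t) < r :=
    fun t ht _ hr ↦ (hderiv t ht).liminf_right_slope_le hr
  have hgronwall := le_gronwallBound_of_liminf_deriv_right_le (ε := 0) hcont hslope le_rfl
    (by simpa only [add_zero] using hbound) b (right_mem_Icc.2 hab)
  rwa [gronwallBound_ε0, mul_comm] at hgronwall

lemma sq_add_add_mul_sq_le_exp_abs_mul (X v t : ℝ) :
    v ^ 2 + (X + t * v) ^ 2 ≤ exp |t| * (v ^ 2 + X ^ 2) := by
  wlog ht : 0 ≤ t generalizing v t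
  · simpa only [neg_mul_neg, abs_neg, neg_sq] using this (-v) (-t) (neg_nonneg.2 (le_of_not_ge ht))
  have hderiv (τ : ℝ) :
      HasDerivAt (fun τ ↦ v ^ 2 + (X + τ * v) ^ 2) (2 * (X + τ * v) * v) τ := by
    simpa using ((((hasDerivAt_id τ).mul_const v).const_add X).pow 2).const_add (v ^ 2)
  have hgrowth (τ : ℝ) : 2 * (X + τ * v) * v ≤ 1 * (v ^ 2 + (X + τ * v) ^ 2) := by
    linarith [two_mul_le_add_sq (X + τ * v) v]
  have hgronwall := le_exp_mul_of_deriv_right_le_mul ht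
    (HasDerivAt.continuousOn fun τ _ ↦ hderiv τ) (fun τ _ ↦ (hderiv τ).hasDerivWithinAt)
    fun τ _ ↦ hgrowth τ
  simpa only [one_mul, sub_zero, zero_mul, add_zero, abs_of_nonneg ht] using hgronwall

theorem alphaTilde_add_mul_le (u c ν₀ x s : ℝ) (ξ : EuclideanSpace ℝ (Fin 3)) :
    alphaTilde u c ν₀ (x + s * (ξ 0 + u)) ξ ≤ exp (|c * ν₀ * s| / 2) * alphaTilde u c ν₀ x ξ := by
  have hsq := sq_add_add_mul_sq_le_exp_abs_mul (c * ν₀ * x) (ξ 0 + u) (c * ν₀ * s)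
  calc alphaTilde u c ν₀ (x + s * (ξ 0 + u)) ξ
      = √((ξ 0 + u) ^ 2 + (c * ν₀ * x + c * ν₀ * s * (ξ 0 + u)) ^ 2) := by
        rw [alphaTilde]; ring_nf
    _ ≤ √(exp |c * ν₀ * s| * ((ξ 0 + u) ^ 2 + (c * ν₀ * x) ^ 2)) := sqrt_le_sqrt hsq
    _ = exp (|c * ν₀ * s| / 2) * alphaTilde u c ν₀ x ξ := by
        rw [sqrt_mul (exp_pos _).le, ← exp_half, mul_pow (c * ν₀) x, alphaTilde]

section Weight

variable {χ χ' : ℝ → ℝ} (hderiv : ∀ y ≥ 0, HasDerivWithinAt χ (χ' y) (Ici 0) y)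
include hderiv

lemma apply_exp_mul_le_of_mul_deriv_le {p a t : ℝ} (hgrowth : ∀ y ≥ 0, y * χ' y ≤ p * χ y)
    (ha : 0 ≤ a) (ht : 0 ≤ t) : χ (exp t * a) ≤ exp (p * t) * χ a := by
  have hpos (τ : ℝ) : 0 ≤ exp τ * a := mul_nonneg (exp_pos τ).le ha
  have hcomp (τ : ℝ) :
      HasDerivAt (fun τ ↦ χ (exp τ * a)) (χ' (exp τ * a) * (exp τ * a)) τ :=
    (hderiv _ (hpos τ)).comp_hasDerivAt τ ((hasDerivAt_exp τ).mul_const a) (.of_forall hpos)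
  have hgronwall := le_exp_mul_of_deriv_right_le_mul ht
    (HasDerivAt.continuousOn fun τ _ ↦ hcomp τ) (fun τ _ ↦ (hcomp τ).hasDerivWithinAt)
    fun τ _ ↦ (mul_comm _ _).trans_le (hgrowth _ (hpos τ))
  simpa only [sub_zero, exp_zero, one_mul] using hgronwall

lemma apply_alphaTilde_add_mul_le {p : ℝ} (hmono : MonotoneOn χ (Ici 0))
    (hgrowth : ∀ y ≥ 0, y * χ' y ≤ p * χ y) (u c ν₀ x s : ℝ) (ξ : EuclideanSpace ℝ (Fin 3)) :
    χ (alphaTilde u c ν₀ (x + s * (ξ 0 + u)) ξ) ≤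
      exp (p / 2 * |c * ν₀ * s|) * χ (alphaTilde u c ν₀ x ξ) := by
  have hnonneg (y : ℝ) : 0 ≤ alphaTilde u c ν₀ y ξ := sqrt_nonneg _
  calc χ (alphaTilde u c ν₀ (x + s * (ξ 0 + u)) ξ)
      ≤ χ (exp (|c * ν₀ * s| / 2) * alphaTilde u c ν₀ x ξ) :=
        hmono (hnonneg _) (mul_nonneg (exp_pos _).le (hnonneg x)) (alphaTilde_add_mul_le ..)
    _ ≤ exp (p * (|c * ν₀ * s| / 2)) * χ (alphaTilde u c ν₀ x ξ) :=
        apply_exp_mul_le_of_mul_deriv_le hderiv hgrowth (hnonneg x) (by positivity)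
    _ = exp (p / 2 * |c * ν₀ * s|) * χ (alphaTilde u c ν₀ x ξ) := by
        rw [mul_div_assoc', div_mul_eq_mul_div]

theorem velocity_lemma_of_mul_deriv_le {p : ℝ} (hmono : MonotoneOn χ (Ici 0))
    (hgrowth : ∀ y ≥ 0, y * χ' y ≤ p * χ y) (u c ν₀ x s : ℝ) (ξ : EuclideanSpace ℝ (Fin 3)) :
    exp (-(p / 2 * |c * ν₀ * s|)) * χ (alphaTilde u c ν₀ (x - s * (ξ 0 + u)) ξ) ≤
        χ (alphaTilde u c ν₀ x ξ) ∧
      χ (alphaTilde u c ν₀ x ξ) ≤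
        exp (p / 2 * |c * ν₀ * s|) * χ (alphaTilde u c ν₀ (x - s * (ξ 0 + u)) ξ) := by
  constructor
  · rw [exp_neg, inv_mul_le_iff₀ (exp_pos _)]
    simpa only [neg_mul, ← sub_eq_add_neg, mul_neg, abs_neg] using
      apply_alphaTilde_add_mul_le hderiv hmono hgrowth u c ν₀ x (-s) ξ
  · simpa only [sub_add_cancel] using
      apply_alphaTilde_add_mul_le hderiv hmono hgrowth u c ν₀ (x - s * (ξ 0 + u)) s ξ

lemma monotoneOn_Ici_of_hasDerivWithinAt_nonneg (hnonneg : ∀ y ≥ 0, 0 ≤ χ' y) :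
    MonotoneOn χ (Ici 0) :=
  monotoneOn_of_hasDerivWithinAt_nonneg (convex_Ici 0)
    (fun y hy ↦ (hderiv y hy).continuousWithinAt)
    (fun y hy ↦ (hderiv y (interior_subset hy)).mono interior_subset)
    fun y hy ↦ hnonneg y (interior_subset hy)

lemma mul_deriv_le_of_cutoff {r R L k : ℝ} (hr : 0 < r) (hrR : r ≤ R) (hL : 0 ≤ L)
    (hmono : MonotoneOn χ (Ici 0)) (hid : ∀ y, 0 ≤ y → y ≤ r → χ y = y)
    (hconst : ∀ y, R ≤ y → χ y = k) (hbound : ∀ y ≥ 0, χ' y ≤ L) {y : ℝ} (hy : 0 ≤ y) :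
    y * χ' y ≤ L * (R / r) * χ y := by
  have hR : 0 < R := hr.trans_le hrR
  have hratio : 1 ≤ R / r := (one_le_div hr).2 hrR
  have hχ : 0 ≤ χ y := hid 0 le_rfl hr.le ▸ hmono self_mem_Ici hy hy
  rcases le_or_gt y R with hyR | hRy
  · have hchord : y ≤ R / r * χ y := by
      rcases le_total y r with hyr | hry
      · rw [hid y hy hyr]
        exact le_mul_of_one_le_left hy hratio
      · calc y ≤ R / r * r := by rwa [div_mul_cancel₀ R hr.ne']
          _ = R / r * χ r := by rw [hid r hr.le le_rfl]
          _ ≤ R / r * χ y := by gcongr; exact hmono hr.le hy hry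
    calc y * χ' y ≤ y * L := by gcongr; exact hbound y hy
      _ ≤ L * (R / r) * χ y := by
        rw [mul_comm, mul_assoc]
        gcongr
  · have hzero : HasDerivAt χ 0 y := (hasDerivAt_const y k).congr_of_eventuallyEq <| by
      filter_upwards [lt_mem_nhds hRy] with z hz using hconst z hz.le
    have hχ' : χ' y = 0 :=
      ((hderiv y hy).hasDerivAt (Ici_mem_nhds (hR.trans hRy))).unique hzero
    rw [hχ', mul_zero]
    positivity

theorem velocity_lemma_cutoff_general {r R L k : ℝ} (hr : 0 < r) (hrR : r ≤ R)
    (hnonneg : ∀ y ≥ 0, 0 ≤ χ' y) (hid : ∀ y, 0 ≤ y → y ≤ r → χ y = y)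
    (hconst : ∀ y, R ≤ y → χ y = k) (hbound : ∀ y ≥ 0, χ' y ≤ L)
    (u c ν₀ x s : ℝ) (ξ : EuclideanSpace ℝ (Fin 3)) :
    exp (-(L * (R / r) / 2 * |c * ν₀ * s|)) * χ (alphaTilde u c ν₀ (x - s * (ξ 0 + u)) ξ) ≤
        χ (alphaTilde u c ν₀ x ξ) ∧
      χ (alphaTilde u c ν₀ x ξ) ≤
        exp (L * (R / r) / 2 * |c * ν₀ * s|) * χ (alphaTilde u c ν₀ (x - s * (ξ 0 + u)) ξ) := by
  have hL : 0 ≤ L := (hnonneg 0 le_rfl).trans (hbound 0 le_rfl)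
  have hmono : MonotoneOn χ (Ici 0) := monotoneOn_Ici_of_hasDerivWithinAt_nonneg hderiv hnonneg
  have hgrowth : ∀ y ≥ 0, y * χ' y ≤ L * (R / r) * χ y :=
    fun _ ↦ mul_deriv_le_of_cutoff hderiv hr hrR hL hmono hid hconst hbound
  exact velocity_lemma_of_mul_deriv_le hderiv hmono hgrowth u c ν₀ x s ξ

end Weight

/-- Velocity Lemma for the cut-off weight: with
`α(x,ξ) = χ(α̃(x,ξ))`, whenever `x ≥ 0` and `x − s(ξ₁+u) ≥ 0`,
`e^{−2cν₀s}·α(x−s(ξ₁+u),ξ) ≤ α(x,ξ) ≤ e^{2cν₀s}·α(x−s(ξ₁+u),ξ)`. -/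
theorem velocity_lemma_cutoff (u ν₀ c : ℝ) (hν₀ : 0 < ν₀) (hc : 0 < c)
    (χ χ' : ℝ → ℝ)
    (hderiv : ∀ s ≥ (0:ℝ), HasDerivAt χ (χ' s) s)
    (hcont : ContinuousOn χ' (Set.Ici (0:ℝ)))
    (hmono : ∀ s ≥ (0:ℝ), 0 ≤ χ' s)
    (hid : ∀ s : ℝ, 0 ≤ s → s ≤ 1/2 → χ s = s)
    (hone : ∀ s : ℝ, 2 ≤ s → χ s = 1)
    (hbound : ∀ s ≥ (0:ℝ), |χ' s| ≤ 1)
    (ξ : EuclideanSpace ℝ (Fin 3)) (x s : ℝ)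
    (hx : 0 ≤ x) (hs : 0 ≤ s) (hxs : 0 ≤ x - s * (ξ 0 + u)) :
    Real.exp (-(2 * c * ν₀ * s)) * χ (alphaTilde u c ν₀ (x - s * (ξ 0 + u)) ξ) ≤
        χ (alphaTilde u c ν₀ x ξ) ∧
      χ (alphaTilde u c ν₀ x ξ) ≤
        Real.exp (2 * c * ν₀ * s) * χ (alphaTilde u c ν₀ (x - s * (ξ 0 + u)) ξ) := by
  have hrate : 1 * (2 / (1 / 2)) / 2 * |c * ν₀ * s| = 2 * c * ν₀ * s := by
    rw [abs_of_nonneg (by positivity)]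
    ring
  simpa only [hrate] using velocity_lemma_cutoff_general (fun y hy ↦ (hderiv y hy).hasDerivWithinAt)
    one_half_pos (by norm_num) hmono hid hone (fun y hy ↦ le_of_abs_le (hbound y hy)) u c ν₀ x s ξ
end
end

section
/- Let ν : ℝ³ → ℝ be continuous with ν(ξ) ≥ ν₀(1+|ξ|) for all ξ, where ν₀ > 0, and let u, τ ∈ ℝ with |u| ≤ 1 and |τ| ≤ ν₀/2. Suppose φ ∈ L^∞(ℝ³) satisfies, for every ξ ∈ ℝ³, φ(ξ) = (ν(ξ) − τ(ξ₁+u))⁻¹ · ∫_{ℝ³} (k₁(ξ,ξ') + k₂(ξ,ξ')) φ(ξ') dξ'. Then φ is continuous on ℝ³. -/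
open MeasureTheory

noncomputable section

/-- The first Grad kernel `k₁(ξ,ξ') = C₁|ξ−ξ'| e^{−(|ξ|²+|ξ'|²)/4}`. -/
def gradK1 (C₁ : ℝ) (ξ ξ' : EuclideanSpace ℝ (Fin 3)) : ℝ :=
  C₁ * ‖ξ - ξ'‖ * Real.exp (-(‖ξ‖ ^ 2 + ‖ξ'‖ ^ 2) / 4)

/-- The second Grad kernel
`k₂(ξ,ξ') = C₂|ξ−ξ'|⁻¹ e^{−|ξ−ξ'|²/8 − (|ξ|²−|ξ'|²)²/(8|ξ−ξ'|²)}`. -/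
def gradK2 (C₂ : ℝ) (ξ ξ' : EuclideanSpace ℝ (Fin 3)) : ℝ :=
  C₂ * ‖ξ - ξ'‖⁻¹ *
    Real.exp (-‖ξ - ξ'‖ ^ 2 / 8 - (‖ξ‖ ^ 2 - ‖ξ'‖ ^ 2) ^ 2 / (8 * ‖ξ - ξ'‖ ^ 2))

/-! The kernel `k = k₁ + k₂` is dominated by `g (ξ - ξ')`, where `g` is integrable and continuous
off the origin. No integrable function dominates all `k(ξ, ·)` with `ξ` near a given point, because
the singularity moves with `ξ`; but the integrals of the translates `g (ξ - ·)` do not depend on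
`ξ`, so the dominated convergence theorem with a varying dominating function applies and
`ξ ↦ ∫ k(ξ, ξ') φ(ξ') dξ'` is continuous. The fixed-point equation displays `φ` as the quotient of
this function by the continuous, nowhere vanishing function `ν(ξ) - τ(ξ₁ + u)`. -/

open Filter Topology

section VaryingDomination

variable {α E : Type*} [MeasurableSpace α] {μ : Measure α} [NormedAddCommGroup E]

theorem tendsto_integral_norm_sub_of_tendsto_integral_bound {F : ℕ → α → E} {f : α → E}
    {G : ℕ → α → ℝ} {g : α → ℝ} (hF_int : ∀ n, Integrable (F n) μ) (hf_int : Integrable f μ)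
    (hG_int : ∀ n, Integrable (G n) μ) (hg_int : Integrable g μ)
    (hF_le : ∀ n, ∀ᵐ a ∂μ, ‖F n a‖ ≤ G n a) (hf_le : ∀ᵐ a ∂μ, ‖f a‖ ≤ g a)
    (hF_lim : ∀ᵐ a ∂μ, Tendsto (F · a) atTop (𝓝 (f a)))
    (hG_lim : ∀ᵐ a ∂μ, Tendsto (G · a) atTop (𝓝 (g a)))
    (hG_integral : Tendsto (fun n ↦ ∫ a, G n a ∂μ) atTop (𝓝 (∫ a, g a ∂μ))) :
    Tendsto (fun n ↦ ∫ a, ‖F n a - f a‖ ∂μ) atTop (𝓝 0) := by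
  -- Since `‖F n - f‖ ≤ G n + g`, the excess of `‖F n - f‖` over `G n - g` is at most `2 * g`.
  let excess (n : ℕ) (a : α) : ℝ := max (‖F n a - f a‖ - (G n a - g a)) 0
  have excess_int (n : ℕ) : Integrable (excess n) μ :=
    (((hF_int n).sub hf_int).norm.sub ((hG_int n).sub hg_int)).pos_part
  have excess_integral : Tendsto (fun n ↦ ∫ a, excess n a ∂μ) atTop (𝓝 0) := by
    rw [← integral_zero α ℝ (μ := μ)]
    refine tendsto_integral_of_dominated_convergence (fun a ↦ 2 * g a)
      (fun n ↦ (excess_int n).aestronglyMeasurable) (hg_int.const_mul 2) (fun n ↦ ?_) ?_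
    · filter_upwards [hF_le n, hf_le] with a hFa hfa
      rw [Real.norm_of_nonneg (le_max_right _ _)]
      refine max_le ?_ ?_ <;> linarith [norm_sub_le (F n a) (f a), norm_nonneg (f a)]
    · filter_upwards [hF_lim, hG_lim] with a hFa hGa
      simpa using ((hFa.sub_const (f a)).norm.sub (hGa.sub_const (g a))).max
        (tendsto_const_nhds (x := (0 : ℝ)))
  refine squeeze_zero (fun n ↦ integral_nonneg fun a ↦ norm_nonneg _) (fun n ↦ ?_)
    (by simpa using excess_integral.add (hG_integral.sub_const (∫ a, g a ∂μ)))
  calc ∫ a, ‖F n a - f a‖ ∂μ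
      ≤ ∫ a, (excess n a + (G n a - g a)) ∂μ :=
        integral_mono ((hF_int n).sub hf_int).norm ((excess_int n).add ((hG_int n).sub hg_int))
          fun a ↦ sub_le_iff_le_add.1 (le_max_left _ _)
    _ = ∫ a, excess n a ∂μ + (∫ a, G n a ∂μ - ∫ a, g a ∂μ) := by
        rw [← integral_sub (hG_int n) hg_int]
        exact integral_add (excess_int n) ((hG_int n).sub hg_int)

theorem tendsto_integral_of_tendsto_integral_bound [NormedSpace ℝ E] {F : ℕ → α → E} {f : α → E}
    {G : ℕ → α → ℝ} {g : α → ℝ} (hF_meas : ∀ n, AEStronglyMeasurable (F n) μ)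
    (hG_int : ∀ n, Integrable (G n) μ) (hg_int : Integrable g μ)
    (hF_le : ∀ n, ∀ᵐ a ∂μ, ‖F n a‖ ≤ G n a)
    (hF_lim : ∀ᵐ a ∂μ, Tendsto (F · a) atTop (𝓝 (f a)))
    (hG_lim : ∀ᵐ a ∂μ, Tendsto (G · a) atTop (𝓝 (g a)))
    (hG_integral : Tendsto (fun n ↦ ∫ a, G n a ∂μ) atTop (𝓝 (∫ a, g a ∂μ))) :
    Tendsto (fun n ↦ ∫ a, F n a ∂μ) atTop (𝓝 (∫ a, f a ∂μ)) := by
  have hF_int (n : ℕ) : Integrable (F n) μ := (hG_int n).mono' (hF_meas n) (hF_le n)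
  have hf_le : ∀ᵐ a ∂μ, ‖f a‖ ≤ g a := by
    filter_upwards [ae_all_iff.2 hF_le, hF_lim, hG_lim] with a hle hFa hGa
    exact le_of_tendsto_of_tendsto' hFa.norm hGa hle
  have hf_int : Integrable f μ :=
    hg_int.mono' (aestronglyMeasurable_of_tendsto_ae atTop hF_meas hF_lim) hf_le
  rw [tendsto_iff_norm_sub_tendsto_zero]
  refine squeeze_zero (fun n ↦ norm_nonneg _) (fun n ↦ ?_)
    (tendsto_integral_norm_sub_of_tendsto_integral_bound hF_int hf_int hG_int hg_int hF_le hf_le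
      hF_lim hG_lim hG_integral)
  rw [← integral_sub (hF_int n) hf_int]
  exact norm_integral_le_integral_norm _

theorem continuous_integral_of_norm_le_sub {X : Type*} [AddGroup X] [TopologicalSpace X]
    [ContinuousSub X] [SequentialSpace X] [MeasurableSpace X] [MeasurableAdd X] [MeasurableNeg X]
    {μ : Measure X} [μ.IsAddLeftInvariant] [μ.IsNegInvariant] [NormedSpace ℝ E]
    {K : X → X → E} {g : X → ℝ} (hK_meas : ∀ x, AEStronglyMeasurable (K x) μ)
    (hK_cont : ∀ x, ∀ᵐ y ∂μ, ContinuousAt (K · y) x) (hK_le : ∀ x, ∀ᵐ y ∂μ, ‖K x y‖ ≤ g (x - y))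
    (hg_int : Integrable g μ) (hg_cont : ∀ᵐ z ∂μ, ContinuousAt g z) :
    Continuous fun x ↦ ∫ y, K x y ∂μ := by
  refine SeqContinuous.continuous fun {x x₀} hx ↦ ?_
  refine tendsto_integral_of_tendsto_integral_bound (fun n ↦ hK_meas (x n))
    (fun n ↦ hg_int.comp_sub_left (x n)) (hg_int.comp_sub_left x₀) (fun n ↦ hK_le (x n)) ?_ ?_
    (by simp only [integral_sub_left_eq_self g μ, tendsto_const_nhds])
  · filter_upwards [hK_cont x₀] with y hy using hy.tendsto.comp hx
  · have h_preserving := Measure.measurePreserving_sub_left μ x₀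
    filter_upwards [h_preserving.quasiMeasurePreserving.ae hg_cont] with y hy
    exact hy.tendsto.comp (hx.sub_const y)

end VaryingDomination

section GradKernel

theorem integrable_norm_rpow_mul_exp_neg_mul_sq {E : Type*} [NormedAddCommGroup E]
    [NormedSpace ℝ E] [FiniteDimensional ℝ E] [Nontrivial E] [MeasurableSpace E] [BorelSpace E]
    (μ : Measure E) [μ.IsAddHaarMeasure] {b s : ℝ} (hb : 0 < b)
    (hs : -(Module.finrank ℝ E : ℝ) < s) :
    Integrable (fun z : E ↦ ‖z‖ ^ s * Real.exp (-b * ‖z‖ ^ 2)) μ := by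
  rw [integrable_fun_norm_addHaar μ (f := fun r ↦ r ^ s * Real.exp (-b * r ^ 2))]
  have hdim : 1 ≤ Module.finrank ℝ E := Module.finrank_pos
  refine (integrableOn_rpow_mul_exp_neg_mul_sq hb
    (s := (Module.finrank ℝ E - 1 : ℕ) + s) ?_).congr_fun (fun r hr ↦ ?_) measurableSet_Ioi
  · push_cast [hdim]
    linarith
  · simp only [Real.rpow_add hr, Real.rpow_natCast, smul_eq_mul, mul_assoc]

/-- The function `g` of the difference `z = ξ - ξ'` by which the Grad kernel `k₁ + k₂` is bounded:
`|k₁(ξ,ξ') + k₂(ξ,ξ')| ≤ g(ξ - ξ')`. -/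
def gradMajorant {E : Type*} [Norm E] (C₁ C₂ : ℝ) (z : E) : ℝ :=
  (|C₁| * ‖z‖ + |C₂| * ‖z‖⁻¹) * Real.exp (-‖z‖ ^ 2 / 8)

variable (C₁ C₂ : ℝ)

theorem integrable_gradMajorant {E : Type*} [NormedAddCommGroup E] [NormedSpace ℝ E]
    [MeasurableSpace E] [BorelSpace E] (μ : Measure E) [μ.IsAddHaarMeasure]
    (hE : 1 < Module.finrank ℝ E) : Integrable (gradMajorant (E := E) C₁ C₂) μ := by
  have : FiniteDimensional ℝ E := Module.finite_of_finrank_pos (by lia)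
  have : Nontrivial E := Module.nontrivial_of_finrank_pos (R := ℝ) (by lia)
  have hdim : (1 : ℝ) < Module.finrank ℝ E := by exact_mod_cast hE
  have h_linear := integrable_norm_rpow_mul_exp_neg_mul_sq μ (b := 1 / 8) (s := 1)
    (by norm_num) (by linarith)
  have h_inverse := integrable_norm_rpow_mul_exp_neg_mul_sq μ (b := 1 / 8) (s := -1)
    (by norm_num) (by linarith)
  refine ((h_linear.const_mul |C₁|).add (h_inverse.const_mul |C₂|)).congr (.of_forall fun z ↦ ?_)
  simp only [gradMajorant, Pi.add_apply, Real.rpow_one, Real.rpow_neg_one]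
  ring_nf

theorem continuousAt_gradMajorant {E : Type*} [NormedAddCommGroup E] {z : E} (hz : z ≠ 0) :
    ContinuousAt (gradMajorant C₁ C₂) z := by
  have : ‖z‖ ≠ 0 := norm_ne_zero_iff.2 hz
  unfold gradMajorant
  fun_prop (disch := assumption)

variable (x y : EuclideanSpace ℝ (Fin 3))

theorem abs_gradK1_le :
    |gradK1 C₁ x y| ≤ |C₁| * ‖x - y‖ * Real.exp (-‖x - y‖ ^ 2 / 8) := by
  have h_norm : ‖x - y‖ ^ 2 ≤ 2 * (‖x‖ ^ 2 + ‖y‖ ^ 2) := by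
    nlinarith [parallelogram_law_with_norm ℝ x y, sq_nonneg ‖x + y‖]
  rw [gradK1, abs_mul, abs_mul, abs_norm, Real.abs_exp]
  refine mul_le_mul_of_nonneg_left (Real.exp_le_exp.2 ?_) (by positivity)
  linarith

theorem abs_gradK2_le :
    |gradK2 C₂ x y| ≤ |C₂| * ‖x - y‖⁻¹ * Real.exp (-‖x - y‖ ^ 2 / 8) := by
  rw [gradK2, abs_mul, abs_mul, abs_inv, abs_norm, Real.abs_exp]
  gcongr
  exact sub_le_self _ (by positivity)

theorem abs_gradK1_add_gradK2_le :
    |gradK1 C₁ x y + gradK2 C₂ x y| ≤ gradMajorant C₁ C₂ (x - y) :=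
  calc |gradK1 C₁ x y + gradK2 C₂ x y| ≤ |gradK1 C₁ x y| + |gradK2 C₂ x y| := abs_add_le _ _
    _ ≤ _ := add_le_add (abs_gradK1_le C₁ x y) (abs_gradK2_le C₂ x y)
    _ = gradMajorant C₁ C₂ (x - y) := by rw [gradMajorant, add_mul]

theorem measurable_gradK1_add_gradK2 : Measurable fun y ↦ gradK1 C₁ x y + gradK2 C₂ x y := by
  unfold gradK1 gradK2
  fun_prop

variable {x y} in
theorem continuousAt_gradK1_add_gradK2 (hxy : x ≠ y) :
    ContinuousAt (fun x ↦ gradK1 C₁ x y + gradK2 C₂ x y) x := by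
  have h_norm : ‖x - y‖ ≠ 0 := norm_ne_zero_iff.2 (sub_ne_zero.2 hxy)
  have h_denom : 8 * ‖x - y‖ ^ 2 ≠ 0 := by positivity
  unfold gradK1 gradK2
  fun_prop (disch := assumption)

variable {F : Type*} [NormedAddCommGroup F] [NormedSpace ℝ F] {φ : EuclideanSpace ℝ (Fin 3) → F}

theorem continuous_integral_gradK1_add_gradK2_smul (hφ : MemLp φ ⊤) :
    Continuous fun x ↦ ∫ y, (gradK1 C₁ x y + gradK2 C₂ x y) • φ y := by
  refine continuous_integral_of_norm_le_sub
    (g := fun z ↦ gradMajorant C₁ C₂ z * lpNorm φ ⊤ volume) (fun x ↦ ?_) (fun x ↦ ?_) (fun x ↦ ?_)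
    ((integrable_gradMajorant C₁ C₂ volume (by simp)).mul_const _) ?_
  · exact (measurable_gradK1_add_gradK2 C₁ C₂ x).aestronglyMeasurable.smul hφ.aestronglyMeasurable
  · filter_upwards [Measure.ae_ne volume x] with y hy
    exact (continuousAt_gradK1_add_gradK2 C₁ C₂ hy.symm).smul continuousAt_const
  · filter_upwards [ae_le_lpNorm_exponent_top hφ] with y hy
    rw [norm_smul, Real.norm_eq_abs]
    gcongr
    exacts [(abs_nonneg _).trans (abs_gradK1_add_gradK2_le C₁ C₂ x y),
      abs_gradK1_add_gradK2_le C₁ C₂ x y]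
  · filter_upwards [Measure.ae_ne volume 0] with z hz
    exact (continuousAt_gradMajorant C₁ C₂ hz).mul continuousAt_const

theorem eigenfunction_continuous_general (hφ : MemLp φ ⊤) {D : EuclideanSpace ℝ (Fin 3) → ℝ}
    (hD_cont : Continuous D) (hD_ne : ∀ ξ, D ξ ≠ 0)
    (hfix : ∀ ξ, φ ξ = (D ξ)⁻¹ • ∫ ξ', (gradK1 C₁ ξ ξ' + gradK2 C₂ ξ ξ') • φ ξ') :
    Continuous φ := by
  rw [funext hfix]
  exact (hD_cont.inv₀ hD_ne).smul (continuous_integral_gradK1_add_gradK2_smul C₁ C₂ hφ)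

end GradKernel

theorem mul_apply_add_lt_mul_one_add_norm {ι : Type*} [Fintype ι] {ν₀ u τ : ℝ} (hν₀ : 0 < ν₀)
    (hu : |u| ≤ 1) (hτ : |τ| ≤ ν₀ / 2) (ξ : EuclideanSpace ℝ ι) (i : ι) :
    τ * (ξ i + u) < ν₀ * (1 + ‖ξ‖) := by
  have h_coord : |ξ i + u| ≤ 1 + ‖ξ‖ := by
    linarith [abs_add_le (ξ i) u, Real.norm_eq_abs (ξ i), PiLp.norm_apply_le ξ i]
  calc τ * (ξ i + u) ≤ |τ| * |ξ i + u| := (le_abs_self _).trans_eq (abs_mul _ _)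
    _ ≤ ν₀ / 2 * (1 + ‖ξ‖) := by gcongr
    _ < ν₀ * (1 + ‖ξ‖) := by gcongr; linarith

/-- a bounded measurable solution `φ` of the fixed-point equation
`φ(ξ) = (ν(ξ) − τ(ξ₁+u))⁻¹ ∫ k(ξ,ξ') φ(ξ') dξ'` is continuous on `ℝ³`. -/
theorem eigenfunction_continuous (C₁ C₂ : ℝ) (hC₁ : 0 < C₁) (hC₂ : 0 < C₂)
    (ν₀ : ℝ) (hν₀ : 0 < ν₀) (ν : EuclideanSpace ℝ (Fin 3) → ℝ)
    (hνcont : Continuous ν) (hνlb : ∀ ξ, ν₀ * (1 + ‖ξ‖) ≤ ν ξ)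
    (u τ : ℝ) (hu : |u| ≤ 1) (hτ : |τ| ≤ ν₀ / 2)
    (φ : EuclideanSpace ℝ (Fin 3) → ℝ) (hφmeas : Measurable φ)
    (B : ℝ) (hφbdd : ∀ ξ, |φ ξ| ≤ B)
    (hfix : ∀ ξ : EuclideanSpace ℝ (Fin 3),
      φ ξ = (ν ξ - τ * (ξ 0 + u))⁻¹ *
        ∫ ξ' : EuclideanSpace ℝ (Fin 3), (gradK1 C₁ ξ ξ' + gradK2 C₂ ξ ξ') * φ ξ') :
    Continuous φ :=
  eigenfunction_continuous_general C₁ C₂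
    (memLp_top_of_bound hφmeas.aestronglyMeasurable B (.of_forall hφbdd)) (by fun_prop)
    (fun ξ ↦ (sub_pos.2 ((mul_apply_add_lt_mul_one_add_norm hν₀ hu hτ ξ 0).trans_le
      (hνlb ξ))).ne') hfix
end
end

section
/- For every constant C > 0 there exist a constant C' > 0 and a time t₀ ≥ 1 such that the following holds. For all t ≥ t₀, all T with 1 < T ≤ t, all x ≥ 0 and all ξ = (ξ₁,ξ₂,ξ₃) ∈ ℝ³ with x − T(ξ₁+u) ≥ 0, ∫_{t−T}^{t} e^{−ν(ξ)(t−s)/2} · ( ∫_{ℝ³} e^{−C|ξ−ξ'|²}/|ξ−ξ'| · α(x−(t−s)(ξ₁+u), ξ')⁻¹ dξ' ) ds ≤ C' · t / α(x,ξ). -/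
open MeasureTheory

noncomputable section

/-! Everything is estimated with `[0, ∞]`-valued integrals, so that no integrability has to be known
in advance. With `κ = c ν₀`, the weight `α̃(y, ξ')` dominates both `|κ y|` and `|ξ'₁ + u|`, whence
`α⁻¹ ≤ 2 + α̃⁻¹ ≤ 2 + |κ y|^{-1/2} |ξ'₁ + u|^{-1/2}`; likewise `|η|⁻¹ ≤ |η₂|^{-1/2} |η₃|^{-1/2}`.
The `ξ'`-integral thus splits into three one-dimensional Gaussian integrals with integrable
singularities and is `O(1 + |κ y|^{-1/2})`. Along the trajectory `y` is affine in time and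
nonnegative at both ends, so the time integral of `|κ y|^{-1/2}` is at most `2 T |κ M|^{-1/2}`,
where `M` is the larger of the two end positions. Finally `x ≤ M` and `|ξ₁ + u| ≤ M / T ≤ M`, while
`α² ≤ α ≤ 2 α̃`, so that `|κ M|^{-1/2} = O(1/α)`. -/

open Set Metric
open scoped ENNReal

section ExtendedPowers

variable {a b c d m : ℝ≥0∞} {r : ℝ}

lemma ennreal_rpow_le_rpow_of_nonpos (hr : r ≤ 0) (hab : a ≤ b) : b ^ r ≤ a ^ r := by
  rw [← neg_neg r, ENNReal.rpow_neg, ENNReal.rpow_neg a]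
  exact ENNReal.inv_le_inv.2 (ENNReal.rpow_le_rpow hab (neg_nonneg.2 hr))

lemma inv_le_rpow_neg_half_mul (ha : a ≤ d) (hb : b ≤ d) :
    d⁻¹ ≤ a ^ (-2⁻¹ : ℝ) * b ^ (-2⁻¹ : ℝ) :=
  calc
    d⁻¹ = (d ^ (2⁻¹ : ℝ) * d ^ (2⁻¹ : ℝ))⁻¹ := by
      rw [← ENNReal.rpow_add_of_nonneg _ _ (by norm_num) (by norm_num),
        show (2⁻¹ + 2⁻¹ : ℝ) = 1 by norm_num, ENNReal.rpow_one]
    _ = d ^ (-2⁻¹ : ℝ) * d ^ (-2⁻¹ : ℝ) := by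
      rw [ENNReal.rpow_neg, ENNReal.mul_inv] <;> by_cases h : d = 0 <;> simp [h]
    _ ≤ a ^ (-2⁻¹ : ℝ) * b ^ (-2⁻¹ : ℝ) := by
      gcongr ?_ * ?_ <;> exact ennreal_rpow_le_rpow_of_nonpos (by norm_num) ‹_›

lemma enorm_inv_le_inv_enorm (y : ℝ) : ‖y⁻¹‖ₑ ≤ ‖y‖ₑ⁻¹ := by
  rcases eq_or_ne y 0 with rfl | hy
  · simp
  · rw [enorm_inv hy]

lemma rpow_neg_half_le_of_sq_le (hc₀ : c ≠ 0) (hc : c ≠ ⊤) (h : a ^ 2 ≤ c * m) :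
    m ^ (-2⁻¹ : ℝ) ≤ c ^ (2⁻¹ : ℝ) * a⁻¹ := by
  have hroot : a ≤ c ^ (2⁻¹ : ℝ) * m ^ (2⁻¹ : ℝ) := by
    rw [← ENNReal.mul_rpow_of_nonneg _ _ (by norm_num), ENNReal.le_rpow_inv_iff (by norm_num)]
    exact_mod_cast h
  have hc_half₀ : c ^ (2⁻¹ : ℝ) ≠ 0 := by simp [hc₀, hc]
  have hc_half : c ^ (2⁻¹ : ℝ) ≠ ⊤ := by simp [hc₀, hc]
  calc
    m ^ (-2⁻¹ : ℝ) = c ^ (2⁻¹ : ℝ) * (c ^ (2⁻¹ : ℝ) * m ^ (2⁻¹ : ℝ))⁻¹ := by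
      rw [ENNReal.mul_inv (.inl hc_half₀) (.inl hc_half), ← mul_assoc,
        ENNReal.mul_inv_cancel hc_half₀ hc_half, one_mul, ENNReal.rpow_neg]
    _ ≤ c ^ (2⁻¹ : ℝ) * a⁻¹ := by gcongr

end ExtendedPowers

section PowerSingularities

lemma setLIntegral_Icc_enorm_sub_rpow {a b r : ℝ} (hab : a ≤ b) (hr : -1 < r) :
    ∫⁻ s in Icc a b, ‖s - a‖ₑ ^ r = ENNReal.ofReal ((b - a) ^ (r + 1) / (r + 1)) := by
  have hint : IntegrableOn (fun s ↦ (s - a) ^ r) (Ioc a b) := by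
    rw [← intervalIntegrable_iff_integrableOn_Ioc_of_le hab]
    simpa using
      (intervalIntegral.intervalIntegrable_rpow' (a := 0) (b := b - a) hr).comp_sub_right a
  calc
    ∫⁻ s in Icc a b, ‖s - a‖ₑ ^ r = ∫⁻ s in Ioc a b, ENNReal.ofReal ((s - a) ^ r) := by
      rw [setLIntegral_congr Ioc_ae_eq_Icc.symm]
      refine setLIntegral_congr_fun measurableSet_Ioc fun s hs ↦ ?_
      have hs' : 0 < s - a := sub_pos.2 hs.1
      rw [Real.enorm_of_nonneg hs'.le, ENNReal.ofReal_rpow_of_pos hs']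
    _ = ENNReal.ofReal (∫ s in a..b, (s - a) ^ r) := by
      rw [intervalIntegral.integral_of_le hab, ofReal_integral_eq_lintegral_ofReal hint]
      filter_upwards [ae_restrict_mem measurableSet_Ioc] with s hs
      exact Real.rpow_nonneg (sub_nonneg.2 hs.1.le) r
    _ = ENNReal.ofReal ((b - a) ^ (r + 1) / (r + 1)) := by
      rw [intervalIntegral.integral_comp_sub_right (fun s ↦ s ^ r), integral_rpow (.inl hr),
        sub_self, Real.zero_rpow (by linarith), sub_zero]

lemma concaveOn_chord_le {f : ℝ → ℝ} {a b s : ℝ} (hf : ConcaveOn ℝ (Icc a b) f) (hfa : 0 ≤ f a)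
    (hs : s ∈ Icc a b) : f b / (b - a) * (s - a) ≤ f s := by
  rcases (hs.1.trans hs.2).eq_or_lt with rfl | hab
  · simpa [← le_antisymm hs.1 hs.2] using hfa
  have hL : 0 < b - a := sub_pos.2 hab
  have hcoef₀ : 0 ≤ (b - s) / (b - a) := div_nonneg (sub_nonneg.2 hs.2) hL.le
  have hcoef₁ : 0 ≤ (s - a) / (b - a) := div_nonneg (sub_nonneg.2 hs.1) hL.le
  have hpoint : ((b - s) / (b - a)) • a + ((s - a) / (b - a)) • b = s := by
    simp only [smul_eq_mul]; field_simp; ring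
  calc
    f b / (b - a) * (s - a) = ((s - a) / (b - a)) • f b := by rw [smul_eq_mul]; ring
    _ ≤ ((b - s) / (b - a)) • f a + ((s - a) / (b - a)) • f b :=
      le_add_of_nonneg_left (mul_nonneg hcoef₀ hfa)
    _ ≤ f (((b - s) / (b - a)) • a + ((s - a) / (b - a)) • b) :=
      hf.2 (left_mem_Icc.2 hab.le) (right_mem_Icc.2 hab.le) hcoef₀ hcoef₁ (by field_simp; ring)
    _ = f s := by rw [hpoint]

lemma setLIntegral_concaveOn_rpow_le_right {f : ℝ → ℝ} {a b r : ℝ} (hab : a < b)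
    (hf : ConcaveOn ℝ (Icc a b) f) (hfa : 0 ≤ f a) (hfb : 0 ≤ f b) (hr : -1 < r) (hr₀ : r < 0) :
    ∫⁻ s in Icc a b, ‖f s‖ₑ ^ r ≤ ENNReal.ofReal ((b - a) / (r + 1)) * ‖f b‖ₑ ^ r := by
  have hL : 0 < b - a := sub_pos.2 hab
  rcases hfb.eq_or_lt with hfb₀ | hfb₀
  · have hcoef : 0 < (b - a) / (r + 1) := by apply div_pos <;> linarith
    simp [← hfb₀, ENNReal.zero_rpow_of_neg hr₀, hcoef]
  calc
    ∫⁻ s in Icc a b, ‖f s‖ₑ ^ r ≤ ∫⁻ s in Icc a b, ‖f b / (b - a)‖ₑ ^ r * ‖s - a‖ₑ ^ r := by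
      refine setLIntegral_mono' measurableSet_Icc fun s hs ↦ ?_
      have hs₀ : 0 ≤ f b / (b - a) * (s - a) :=
        mul_nonneg (div_pos hfb₀ hL).le (sub_nonneg.2 hs.1)
      rw [← ENNReal.mul_rpow_of_ne_top enorm_ne_top enorm_ne_top, ← enorm_mul]
      refine ennreal_rpow_le_rpow_of_nonpos hr₀.le (enorm_le_iff_norm_le.2 ?_)
      exact abs_le_abs_of_nonneg hs₀ (concaveOn_chord_le hf hfa hs)
    _ = ENNReal.ofReal ((f b / (b - a)) ^ r * ((b - a) ^ (r + 1) / (r + 1))) := by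
      rw [lintegral_const_mul _ (by fun_prop), setLIntegral_Icc_enorm_sub_rpow hab.le hr]
      rw [Real.enorm_of_nonneg (by positivity), ENNReal.ofReal_rpow_of_pos (by positivity),
        ENNReal.ofReal_mul (by positivity)]
    _ = ENNReal.ofReal ((b - a) / (r + 1)) * ‖f b‖ₑ ^ r := by
      rw [Real.enorm_of_nonneg hfb, ENNReal.ofReal_rpow_of_pos hfb₀, ← ENNReal.ofReal_mul
        (by apply div_nonneg <;> linarith), Real.div_rpow hfb hL.le, Real.rpow_add_one hL.ne']
      congr 1
      field_simp

lemma setLIntegral_concaveOn_rpow_le {f : ℝ → ℝ} {a b r : ℝ} (hab : a < b)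
    (hf : ConcaveOn ℝ (Icc a b) f) (hfa : 0 ≤ f a) (hfb : 0 ≤ f b) (hr : -1 < r) (hr₀ : r < 0) :
    ∫⁻ s in Icc a b, ‖f s‖ₑ ^ r ≤
      ENNReal.ofReal ((b - a) / (r + 1)) * ‖max (f a) (f b)‖ₑ ^ r := by
  rcases le_total (f a) (f b) with h | h
  · rw [max_eq_right h]
    exact setLIntegral_concaveOn_rpow_le_right hab hf hfa hfb hr hr₀
  · rw [max_eq_left h]
    have hconc : ConcaveOn ℝ (Icc a b) fun s ↦ f (a + b - s) := by
      simpa [Function.comp_def, AffineMap.lineMap_apply] using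
        hf.comp_affineMap (AffineEquiv.constVSub ℝ (a + b)).toAffineMap
    have hreflect := (Measure.measurePreserving_sub_left volume
      (a + b)).setLIntegral_comp_preimage_emb
      (MeasurableEquiv.subLeft (a + b)).measurableEmbedding (fun s ↦ ‖f s‖ₑ ^ r) (Icc a b)
    have hright := setLIntegral_concaveOn_rpow_le_right hab hconc (by simpa) (by simpa) hr hr₀
    simpa [← hreflect] using hright

variable {E : Type*} [NormedAddCommGroup E] [MeasurableSpace E] [BorelSpace E] {μ : Measure E}

lemma lintegral_mul_enorm_sub_rpow_le [μ.IsAddRightInvariant] {f : E → ℝ≥0∞} (hf : f ≤ 1) {r : ℝ}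
    (hr : r ≤ 0) (q : E) :
    ∫⁻ v, f v * ‖v - q‖ₑ ^ r ∂μ ≤ ∫⁻ v, f v ∂μ + ∫⁻ v in ball 0 1, ‖v‖ₑ ^ r ∂μ := by
  set near : E → ℝ≥0∞ := (ball 0 1).indicator fun v ↦ ‖v‖ₑ ^ r with hnear
  have hnear_meas : Measurable near :=
    Measurable.indicator (by fun_prop) measurableSet_ball
  calc
    ∫⁻ v, f v * ‖v - q‖ₑ ^ r ∂μ ≤ ∫⁻ v, f v + near (v - q) ∂μ := by
      refine lintegral_mono fun v ↦ ?_
      by_cases hv : v - q ∈ ball (0 : E) 1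
      · rw [hnear, indicator_of_mem hv]
        exact (mul_le_of_le_one_left' (hf v)).trans le_add_self
      · have hone : (1 : ℝ≥0∞) ≤ ‖v - q‖ₑ := by
          rw [← enorm_one (G := ℝ), enorm_le_iff_norm_le]
          simpa using hv
        have hpow : ‖v - q‖ₑ ^ r ≤ 1 :=
          (ennreal_rpow_le_rpow_of_nonpos hr hone).trans_eq (ENNReal.one_rpow r)
        exact (mul_le_of_le_one_right' hpow).trans le_self_add
    _ = ∫⁻ v, f v ∂μ + ∫⁻ v in ball 0 1, ‖v‖ₑ ^ r ∂μ := by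
      rw [lintegral_add_right _ (by fun_prop), lintegral_sub_right_eq_self near q, hnear,
        lintegral_indicator measurableSet_ball]

lemma setLIntegral_ball_enorm_rpow_lt_top [NormedSpace ℝ E] [FiniteDimensional ℝ E] [Nontrivial E]
    [μ.IsAddHaarMeasure] {r : ℝ} (hr : -(Module.finrank ℝ E : ℝ) < r) (R : ℝ) :
    ∫⁻ v in ball 0 R, ‖v‖ₑ ^ r ∂μ < ⊤ := by
  have hint : IntegrableOn (fun v : E ↦ ‖v‖ ^ r) (ball 0 R) μ :=
    integrableOn_ball_of_norm_le_rpow (C := 1) (α := -r) Module.finrank_pos (by linarith)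
      (by filter_upwards with v; simp [Real.abs_rpow_of_nonneg])
      (measurable_norm.pow_const r).aestronglyMeasurable
  refine (lintegral_congr_ae (ae_restrict_of_ae ?_)).trans_lt hint.hasFiniteIntegral
  filter_upwards [Measure.ae_ne μ 0] with v hv
  rw [Real.enorm_of_nonneg (by positivity), ← ofReal_norm,
    ENNReal.ofReal_rpow_of_pos (norm_pos_iff.2 hv)]

end PowerSingularities

section Gaussian

lemma lintegral_gaussian_mul_inv_eq_top (b : ℝ) :
    ∫⁻ v : ℝ, ‖Real.exp (-b * v ^ 2) * v⁻¹‖ₑ = ⊤ := by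
  by_contra hfin
  have hint : Integrable fun v : ℝ ↦ Real.exp (-b * v ^ 2) * v⁻¹ :=
    ⟨by fun_prop, lt_top_iff_ne_top.2 hfin⟩
  have hinv : IntervalIntegrable (fun v : ℝ ↦ Real.exp (b * v ^ 2) * (Real.exp (-b * v ^ 2) * v⁻¹))
      volume 0 1 := hint.intervalIntegrable.continuousOn_mul (by fun_prop)
  simp [← mul_assoc, ← Real.exp_add] at hinv

lemma enorm_exp_le_one {y : ℝ} (hy : y ≤ 0) : ‖Real.exp y‖ₑ ≤ 1 := by
  rw [Real.enorm_of_nonneg (Real.exp_nonneg y), ENNReal.ofReal_le_one]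
  exact Real.exp_le_one_iff.2 hy

lemma exists_lintegral_gaussian_mul_rpow_le {b r : ℝ} (hb : 0 < b) (hr : -1 < r) (hr₀ : r ≤ 0) :
    ∃ J : ℝ≥0∞, J ≠ ⊤ ∧ ∀ p : ℝ, ∫⁻ v, ‖Real.exp (-b * (p - v) ^ 2)‖ₑ ≤ J ∧
      ∀ q, ∫⁻ v, ‖Real.exp (-b * (p - v) ^ 2)‖ₑ * ‖v - q‖ₑ ^ r ≤ J := by
  have hgauss : ∀ p, ∫⁻ v, ‖Real.exp (-b * (p - v) ^ 2)‖ₑ = ∫⁻ v, ‖Real.exp (-b * v ^ 2)‖ₑ :=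
    lintegral_sub_left_eq_self (fun v ↦ ‖Real.exp (-b * v ^ 2)‖ₑ)
  have hle_one (p v : ℝ) : ‖Real.exp (-b * (p - v) ^ 2)‖ₑ ≤ 1 :=
    enorm_exp_le_one (mul_nonpos_of_nonpos_of_nonneg (neg_nonpos.2 hb.le) (sq_nonneg _))
  have hball : ∫⁻ v : ℝ in ball 0 1, ‖v‖ₑ ^ r ≠ ⊤ :=
    (setLIntegral_ball_enorm_rpow_lt_top (by simpa) 1).ne
  refine ⟨_, ENNReal.add_ne_top.2 ⟨(integrable_exp_neg_mul_sq hb).2.ne, hball⟩,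
    fun p ↦ ⟨(hgauss p).trans_le le_self_add, fun q ↦ ?_⟩⟩
  rw [← hgauss p]
  exact lintegral_mul_enorm_sub_rpow_le (hle_one p) hr₀ q

end Gaussian

section Euclidean

lemma lintegral_euclideanSpace_prod {n : ℕ} (f : Fin n → ℝ → ℝ≥0∞) (hf : ∀ i, Measurable (f i)) :
    ∫⁻ ξ : EuclideanSpace ℝ (Fin n), ∏ i, f i (ξ i) = ∏ i, ∫⁻ a, f i a := by
  rw [← (PiLp.volume_preserving_toLp (Fin n)).lintegral_comp_emb
    (MeasurableEquiv.toLp 2 (Fin n → ℝ)).measurableEmbedding]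
  change ∫⁻ x : Fin n → ℝ, ∏ i, f i (x i) = _
  induction n with
  | zero => simp [volume_pi]
  | succ n ih =>
    have hprod : Measurable fun x : Fin n → ℝ ↦ ∏ i, f i.succ (x i) := by fun_prop
    rw [← ((volume_preserving_piFinSuccAbove (fun _ ↦ ℝ) 0).symm).lintegral_comp_emb
        (MeasurableEquiv.measurableEmbedding _), Fin.prod_univ_succ, ← ih _ fun i ↦ hf i.succ,
      Measure.volume_eq_prod, ← lintegral_prod_mul (hf 0).aemeasurable hprod.aemeasurable]
    simp [MeasurableEquiv.piFinSuccAbove_symm_apply, Fin.insertNthEquiv, Fin.prod_univ_succ]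

lemma enorm_exp_neg_mul_norm_sq {ι : Type*} [Fintype ι] (b : ℝ) (η : EuclideanSpace ℝ ι) :
    ‖Real.exp (-b * ‖η‖ ^ 2)‖ₑ = ∏ i, ‖Real.exp (-b * η i ^ 2)‖ₑ := by
  simp only [Real.enorm_of_nonneg (Real.exp_nonneg _)]
  rw [← ENNReal.ofReal_prod_of_nonneg fun i _ ↦ Real.exp_nonneg _, ← Real.exp_sum,
    ← Finset.mul_sum, EuclideanSpace.real_norm_sq_eq]

lemma lintegral_gaussian_mul_inv_apply_zero_eq_top (n : ℕ) (b : ℝ) :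
    ∫⁻ η : EuclideanSpace ℝ (Fin (n + 1)), ‖Real.exp (-b * ‖η‖ ^ 2) * (η 0)⁻¹‖ₑ = ⊤ := by
  let g (v : ℝ) : ℝ≥0∞ := ‖Real.exp (-b * v ^ 2)‖ₑ
  let f : Fin (n + 1) → ℝ → ℝ≥0∞ :=
    Fin.cons (fun v ↦ ‖Real.exp (-b * v ^ 2) * v⁻¹‖ₑ) fun _ ↦ g
  have hg : Measurable g := by fun_prop
  have hf : ∀ i, Measurable (f i) := Fin.cases (by simp only [f, Fin.cons_zero]; fun_prop)
    fun i ↦ by simpa only [f, Fin.cons_succ]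
  have hg₀ : ∫⁻ v, g v ≠ 0 :=
    ((lintegral_pos_iff_support hg).2 (by simp [Function.support, g])).ne'
  have hprod (η : EuclideanSpace ℝ (Fin (n + 1))) :
      ‖Real.exp (-b * ‖η‖ ^ 2) * (η 0)⁻¹‖ₑ = ∏ i, f i (η i) := by
    simp only [enorm_mul, enorm_exp_neg_mul_norm_sq, Fin.prod_univ_succ, f, g, Fin.cons_zero,
      Fin.cons_succ]
    ring
  simp only [hprod, lintegral_euclideanSpace_prod f hf]
  simp only [Fin.prod_univ_succ, f, Fin.cons_zero, Fin.cons_succ, Finset.prod_const]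
  rw [lintegral_gaussian_mul_inv_eq_top, ENNReal.top_mul (pow_ne_zero _ hg₀)]

end Euclidean

lemma enorm_setIntegral_mul_integral_le {X Y : Type*} [MeasurableSpace X] [MeasurableSpace Y]
    {μ : Measure X} {ν : Measure Y} {S : Set X} (hS : MeasurableSet S) {w : X → ℝ} {F : X → Y → ℝ}
    (hw : ∀ s ∈ S, ‖w s‖ₑ ≤ 1) :
    ‖∫ s in S, w s * ∫ y, F s y ∂ν ∂μ‖ₑ ≤ ∫⁻ s in S, ∫⁻ y, ‖F s y‖ₑ ∂ν ∂μ := by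
  refine (enorm_integral_le_lintegral_enorm _).trans (setLIntegral_mono' hS fun s hs ↦ ?_)
  rw [enorm_mul]
  exact (mul_le_of_le_one_left' (hw s hs)).trans (enorm_integral_le_lintegral_enorm _)

section GradKernel

/-- Radial kernel `e^{-C|η|²}/|η|` bounding the integral kernel of the linearized collision
operator. At `η = 0` it has the value `0`. -/
def gradKernel {E : Type*} [Norm E] (C : ℝ) (η : E) : ℝ :=
  Real.exp (-C * ‖η‖ ^ 2) / ‖η‖

lemma exp_neg_le_gradKernel {E : Type*} [NormedAddCommGroup E] (C : ℝ) {η : E} (hη : η ≠ 0) :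
    Real.exp (-(C + 1) * ‖η‖ ^ 2) ≤ gradKernel C η := by
  have hη' : 0 < ‖η‖ := norm_pos_iff.2 hη
  have hexp : ‖η‖ ≤ Real.exp (‖η‖ ^ 2) := by
    nlinarith [Real.add_one_le_exp (‖η‖ ^ 2), sq_nonneg (‖η‖ - 1)]
  rw [gradKernel, le_div_iff₀ hη']
  calc
    Real.exp (-(C + 1) * ‖η‖ ^ 2) * ‖η‖
        ≤ Real.exp (-(C + 1) * ‖η‖ ^ 2) * Real.exp (‖η‖ ^ 2) := by gcongr
    _ = Real.exp (-C * ‖η‖ ^ 2) := by rw [← Real.exp_add]; ring_nf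

lemma enorm_gradKernel_le (C : ℝ) (η : EuclideanSpace ℝ (Fin 3)) :
    ‖gradKernel C η‖ₑ ≤ ‖Real.exp (-C * η 0 ^ 2)‖ₑ *
      (‖Real.exp (-C * η 1 ^ 2)‖ₑ * ‖η 1‖ₑ ^ (-2⁻¹ : ℝ)) *
      (‖Real.exp (-C * η 2 ^ 2)‖ₑ * ‖η 2‖ₑ ^ (-2⁻¹ : ℝ)) := by
  calc
    ‖gradKernel C η‖ₑ ≤ ‖Real.exp (-C * ‖η‖ ^ 2)‖ₑ * ‖η‖ₑ⁻¹ := by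
      rw [gradKernel, div_eq_mul_inv, enorm_mul, ← enorm_norm η]
      gcongr
      exact enorm_inv_le_inv_enorm _
    _ ≤ ‖Real.exp (-C * ‖η‖ ^ 2)‖ₑ * (‖η 1‖ₑ ^ (-2⁻¹ : ℝ) * ‖η 2‖ₑ ^ (-2⁻¹ : ℝ)) := by
      gcongr
      exact inv_le_rpow_neg_half_mul (PiLp.enorm_apply_le η 1) (PiLp.enorm_apply_le η 2)
    _ = _ := by
      rw [enorm_exp_neg_mul_norm_sq, Fin.prod_univ_three]
      ring

end GradKernel

/-- The profile `χ` through which the kinetic weight `α = χ(α̃)` saturates: the identity near `0`,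
constant near infinity. No smoothness is asked for. -/
structure IsKineticCutoff (χ : ℝ → ℝ) : Prop where
  monotoneOn : MonotoneOn χ (Ici 0)
  eq_self : ∀ s, 0 ≤ s → s ≤ 1 / 2 → χ s = s
  eq_one : ∀ s, 2 ≤ s → χ s = 1

namespace IsKineticCutoff

variable {χ : ℝ → ℝ} {s : ℝ}

lemma of_hasDerivAt {χ' : ℝ → ℝ} (hderiv : ∀ s ≥ 0, HasDerivAt χ (χ' s) s)
    (hnonneg : ∀ s ≥ 0, 0 ≤ χ' s) (hself : ∀ s, 0 ≤ s → s ≤ 1 / 2 → χ s = s)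
    (hone : ∀ s, 2 ≤ s → χ s = 1) : IsKineticCutoff χ where
  monotoneOn := monotoneOn_of_hasDerivWithinAt_nonneg (convex_Ici 0)
    (fun s hs ↦ (hderiv s hs).continuousAt.continuousWithinAt)
    (fun s hs ↦ (hderiv s (interior_subset hs)).hasDerivWithinAt)
    (fun s hs ↦ hnonneg s (interior_subset hs))
  eq_self := hself
  eq_one := hone

lemma min_half_le (hχ : IsKineticCutoff χ) (hs : 0 ≤ s) : min s (1 / 2) ≤ χ s := by
  rcases le_total s (1 / 2) with h | h
  · exact (min_le_left _ _).trans (hχ.eq_self s hs h).ge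
  · calc
      min s (1 / 2) ≤ χ (1 / 2) := by
        rw [hχ.eq_self _ (by norm_num) le_rfl]; exact min_le_right _ _
      _ ≤ χ s := hχ.monotoneOn (mem_Ici.2 (by norm_num)) hs h

lemma nonneg (hχ : IsKineticCutoff χ) (hs : 0 ≤ s) : 0 ≤ χ s :=
  (le_min hs (by norm_num)).trans (hχ.min_half_le hs)

lemma le_one (hχ : IsKineticCutoff χ) (hs : 0 ≤ s) : χ s ≤ 1 :=
  (hχ.monotoneOn hs (mem_Ici.2 (hs.trans (le_max_left s 2))) (le_max_left s 2)).trans_eq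
    (hχ.eq_one _ (le_max_right s 2))

lemma one_le_inv_enorm (hχ : IsKineticCutoff χ) (hs : 0 ≤ s) : 1 ≤ ‖χ s‖ₑ⁻¹ := by
  rw [ENNReal.one_le_inv, Real.enorm_of_nonneg (hχ.nonneg hs), ENNReal.ofReal_le_one]
  exact hχ.le_one hs

lemma le_two_mul (hχ : IsKineticCutoff χ) (hs : 0 ≤ s) : χ s ≤ 2 * s := by
  rcases le_total s (1 / 2) with h | h
  · linarith [hχ.eq_self s hs h]
  · linarith [hχ.le_one hs]

lemma eq_zero_iff (hχ : IsKineticCutoff χ) (hs : 0 ≤ s) : χ s = 0 ↔ s = 0 := by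
  refine ⟨fun h ↦ ?_, fun h ↦ h ▸ hχ.eq_self 0 le_rfl (by norm_num)⟩
  rcases min_le_iff.1 (h ▸ hχ.min_half_le hs) with h₀ | h₀
  · exact le_antisymm h₀ hs
  · norm_num at h₀

lemma enorm_inv_le (hχ : IsKineticCutoff χ) (hs : 0 ≤ s) : ‖(χ s)⁻¹‖ₑ ≤ 2 + ‖s‖ₑ⁻¹ := by
  rcases le_total s (1 / 2) with h | h
  · rw [hχ.eq_self s hs h]
    exact (enorm_inv_le_inv_enorm s).trans le_add_self
  · have hhalf : 1 / 2 ≤ χ s := min_eq_right h ▸ hχ.min_half_le hs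
    calc
      ‖(χ s)⁻¹‖ₑ ≤ ENNReal.ofReal 2 := by
        rw [Real.enorm_of_nonneg (inv_nonneg.2 (hχ.nonneg hs))]
        exact ENNReal.ofReal_le_ofReal ((inv_anti₀ (by norm_num) hhalf).trans_eq (by norm_num))
      _ ≤ 2 + ‖s‖ₑ⁻¹ := by simp

lemma inv_le_two_mul_inv (hχ : IsKineticCutoff χ) (hs : 0 ≤ s) : s⁻¹ ≤ 2 * (χ s)⁻¹ := by
  rcases hs.eq_or_lt with rfl | hs₀
  · simp [hχ.nonneg le_rfl]
  · have hχs : 0 < χ s := (hχ.nonneg hs).lt_of_ne' ((hχ.eq_zero_iff hs).not.2 hs₀.ne')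
    rw [← div_eq_mul_inv, ← one_div, div_le_div_iff₀ hs₀ hχs, one_mul]
    exact hχ.le_two_mul hs

end IsKineticCutoff

section KineticWeight

variable {u c ν₀ x : ℝ} {χ : ℝ → ℝ} {ξ : EuclideanSpace ℝ (Fin 3)}

lemma alphaTilde_nonneg : 0 ≤ alphaTilde u c ν₀ x ξ := Real.sqrt_nonneg _

lemma abs_velocity_le_alphaTilde : |ξ 0 + u| ≤ alphaTilde u c ν₀ x ξ :=
  Real.abs_le_sqrt (le_add_of_nonneg_right (by positivity))

lemma abs_position_le_alphaTilde : |c * ν₀ * x| ≤ alphaTilde u c ν₀ x ξ :=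
  Real.abs_le_sqrt (by nlinarith [sq_nonneg (ξ 0 + u)])

lemma alphaTilde_le_abs_add_abs : alphaTilde u c ν₀ x ξ ≤ |ξ 0 + u| + |c * ν₀ * x| := by
  rw [alphaTilde, ← mul_pow, ← sq_abs (ξ 0 + u), ← sq_abs (c * ν₀ * x)]
  exact Real.sqrt_le_iff.2 ⟨by positivity,
    by nlinarith [abs_nonneg (ξ 0 + u), abs_nonneg (c * ν₀ * x)]⟩

lemma alphaTilde_zero : alphaTilde u c ν₀ 0 ξ = |ξ 0 + u| := by
  simp [alphaTilde, Real.sqrt_sq_eq_abs]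

lemma IsKineticCutoff.enorm_inv_alphaTilde_le (hχ : IsKineticCutoff χ) :
    ‖(χ (alphaTilde u c ν₀ x ξ))⁻¹‖ₑ ≤
      2 + ‖c * ν₀ * x‖ₑ ^ (-2⁻¹ : ℝ) * ‖ξ 0 + u‖ₑ ^ (-2⁻¹ : ℝ) := by
  have habs : |alphaTilde u c ν₀ x ξ| = alphaTilde u c ν₀ x ξ := abs_of_nonneg alphaTilde_nonneg
  refine (hχ.enorm_inv_le alphaTilde_nonneg).trans ?_
  gcongr
  apply inv_le_rpow_neg_half_mul <;> rw [enorm_le_iff_norm_le, Real.norm_eq_abs, Real.norm_eq_abs,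
    habs]
  exacts [abs_position_le_alphaTilde, abs_velocity_le_alphaTilde]

lemma exists_lintegral_gradKernel_mul_inv_weight_le {C : ℝ} (hC : 0 < C) :
    ∃ K : ℝ≥0∞, K ≠ ⊤ ∧ ∀ χ, IsKineticCutoff χ → ∀ (u c ν₀ y : ℝ) (ξ : EuclideanSpace ℝ (Fin 3)),
      ∫⁻ ξ', ‖gradKernel C (ξ - ξ') * (χ (alphaTilde u c ν₀ y ξ'))⁻¹‖ₑ ≤
        K * (1 + ‖c * ν₀ * y‖ₑ ^ (-2⁻¹ : ℝ)) := by
  obtain ⟨J, hJ, hgauss⟩ := exists_lintegral_gaussian_mul_rpow_le (r := -2⁻¹) hC (by norm_num)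
    (by norm_num)
  refine ⟨2 * J * J * J, by finiteness, fun χ hχ u c ν₀ y ξ ↦ ?_⟩
  set m : ℝ≥0∞ := ‖c * ν₀ * y‖ₑ ^ (-2⁻¹ : ℝ)
  let g (i : Fin 3) (v : ℝ) : ℝ≥0∞ := ‖Real.exp (-C * (ξ i - v) ^ 2)‖ₑ
  let f : Fin 3 → ℝ → ℝ≥0∞ := ![fun v ↦ 2 * g 0 v + m * (g 0 v * ‖v - -u‖ₑ ^ (-2⁻¹ : ℝ)),
    fun v ↦ g 1 v * ‖v - ξ 1‖ₑ ^ (-2⁻¹ : ℝ), fun v ↦ g 2 v * ‖v - ξ 2‖ₑ ^ (-2⁻¹ : ℝ)]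
  have hg (i : Fin 3) : Measurable (g i) := by fun_prop
  have hf (i : Fin 3) : Measurable (f i) := by fin_cases i <;> dsimp [f] <;> fun_prop
  have hf₀ : ∫⁻ v, f 0 v ≤ 2 * J + m * J := by
    simp only [f, Matrix.cons_val_zero]
    rw [lintegral_add_left (by fun_prop), lintegral_const_mul _ (hg 0),
      lintegral_const_mul _ (by fun_prop)]
    gcongr
    exacts [(hgauss _).1, (hgauss _).2 _]
  calc
    ∫⁻ ξ', ‖gradKernel C (ξ - ξ') * (χ (alphaTilde u c ν₀ y ξ'))⁻¹‖ₑ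
        ≤ ∫⁻ ξ' : EuclideanSpace ℝ (Fin 3), ∏ i, f i (ξ' i) := by
      refine lintegral_mono fun ξ' ↦ ?_
      rw [enorm_mul]
      refine (mul_le_mul' (enorm_gradKernel_le C _) hχ.enorm_inv_alphaTilde_le).trans_eq ?_
      simp only [f, g, m, Fin.prod_univ_three, PiLp.sub_apply, enorm_sub_rev (ξ _) (ξ' _),
        sub_neg_eq_add, Matrix.cons_val]
      ring
    _ ≤ (2 * J + m * J) * J * J := by
      rw [lintegral_euclideanSpace_prod f hf, Fin.prod_univ_three]
      gcongr
      exacts [(hgauss _).2 _, (hgauss _).2 _]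
    _ ≤ (2 * J + 2 * m * J) * J * J := by
      gcongr
      exact le_mul_of_one_le_left' one_le_two
    _ = 2 * J * J * J * (1 + m) := by ring

end KineticWeight

section Trajectory

variable {u c ν₀ x T : ℝ} {χ : ℝ → ℝ} {ξ : EuclideanSpace ℝ (Fin 3)}

lemma setLIntegral_line_rpow_le {k v t r : ℝ} (hk : 0 ≤ k) (hT : 0 < T) (hx : 0 ≤ x)
    (hback : 0 ≤ x - T * v) (hr : -1 < r) (hr₀ : r < 0) :
    ∫⁻ s in Icc (t - T) t, ‖k * (x - (t - s) * v)‖ₑ ^ r ≤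
      ENNReal.ofReal (T / (r + 1)) * ‖k * max (x - T * v) x‖ₑ ^ r := by
  have hconc : ConcaveOn ℝ (Icc (t - T) t) fun s ↦ k * (x - (t - s) * v) :=
    ⟨convex_Icc _ _, fun _ _ _ _ α β _ _ hαβ ↦ le_of_eq <| by
      simp only [smul_eq_mul]; linear_combination k * (x - t * v) * hαβ⟩
  have hstart : 0 ≤ k * (x - (t - (t - T)) * v) := by
    rw [sub_sub_cancel]; exact mul_nonneg hk hback
  have hend : 0 ≤ k * (x - (t - t) * v) := by simpa using mul_nonneg hk hx
  refine (setLIntegral_concaveOn_rpow_le (sub_lt_self t hT) hconc hstart hend hr hr₀).trans_eq ?_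
  rw [← mul_max_of_nonneg _ _ hk, sub_sub_cancel, sub_self, zero_mul, sub_zero]

lemma IsKineticCutoff.sq_alphaTilde_le (hχ : IsKineticCutoff χ) (hκ : 0 < c * ν₀) (hT : 1 ≤ T)
    (hx : 0 ≤ x) (hback : 0 ≤ x - T * (ξ 0 + u)) :
    χ (alphaTilde u c ν₀ x ξ) ^ 2 ≤
      2 * ((c * ν₀)⁻¹ + 1) * (c * ν₀ * max (x - T * (ξ 0 + u)) x) := by
  set M := max (x - T * (ξ 0 + u)) x
  have hvelocity : |ξ 0 + u| ≤ M := calc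
    |ξ 0 + u| ≤ T * |ξ 0 + u| := le_mul_of_one_le_left (abs_nonneg _) hT
    _ = |x - (x - T * (ξ 0 + u))| := by
      rw [sub_sub_cancel, abs_mul, abs_of_nonneg (zero_le_one.trans hT)]
    _ ≤ M := abs_sub_le_of_nonneg_of_le hx (le_max_right _ _) hback (le_max_left _ _)
  have hα := alphaTilde_nonneg (u := u) (c := c) (ν₀ := ν₀) (x := x) (ξ := ξ)
  calc
    χ (alphaTilde u c ν₀ x ξ) ^ 2 ≤ χ (alphaTilde u c ν₀ x ξ) :=
      pow_le_of_le_one (hχ.nonneg hα) (hχ.le_one hα) two_ne_zero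
    _ ≤ 2 * (|ξ 0 + u| + |c * ν₀ * x|) :=
      (hχ.le_two_mul hα).trans (by gcongr; exact alphaTilde_le_abs_add_abs)
    _ ≤ 2 * (M + c * ν₀ * M) := by
      rw [abs_of_nonneg (mul_nonneg hκ.le hx)]
      gcongr
      exact le_max_right _ _
    _ = 2 * ((c * ν₀)⁻¹ + 1) * (c * ν₀ * M) := by
      rw [mul_assoc 2, add_mul, inv_mul_cancel_left₀ hκ.ne', one_mul]

lemma exists_lintegral_trajectory_le {C : ℝ} (hC : 0 < C) (hκ : 0 < c * ν₀) :
    ∃ K : ℝ≥0∞, K ≠ ⊤ ∧ ∀ χ, IsKineticCutoff χ → ∀ u t T x : ℝ, 1 ≤ T → 0 ≤ x →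
      ∀ ξ : EuclideanSpace ℝ (Fin 3), 0 ≤ x - T * (ξ 0 + u) →
        ∫⁻ s in Icc (t - T) t, ∫⁻ ξ', ‖gradKernel C (ξ - ξ') *
            (χ (alphaTilde u c ν₀ (x - (t - s) * (ξ 0 + u)) ξ'))⁻¹‖ₑ ≤
          K * ENNReal.ofReal T * ‖χ (alphaTilde u c ν₀ x ξ)‖ₑ⁻¹ := by
  obtain ⟨K, hK, hinner⟩ := exists_lintegral_gradKernel_mul_inv_weight_le hC
  set B : ℝ≥0∞ := ENNReal.ofReal (2 * ((c * ν₀)⁻¹ + 1)) with hB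
  have hB₀ : B ≠ 0 := by rw [hB, ENNReal.ofReal_ne_zero_iff]; positivity
  have hB_top : B ≠ ⊤ := ENNReal.ofReal_ne_top
  refine ⟨K * (1 + 2 * B ^ (2⁻¹ : ℝ)), by finiteness, fun χ hχ u t T x hT hx ξ hback ↦ ?_⟩
  have hT₀ : 0 < T := by linarith
  set a : ℝ≥0∞ := ‖χ (alphaTilde u c ν₀ x ξ)‖ₑ with ha
  set M := max (x - T * (ξ 0 + u)) x
  have hendpoint : ‖c * ν₀ * M‖ₑ ^ (-2⁻¹ : ℝ) ≤ B ^ (2⁻¹ : ℝ) * a⁻¹ := by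
    refine rpow_neg_half_le_of_sq_le hB₀ hB_top ?_
    rw [ha, hB, ← enorm_pow, Real.enorm_of_nonneg (sq_nonneg _), Real.enorm_of_nonneg
      (mul_nonneg hκ.le (hx.trans (le_max_right _ _))), ← ENNReal.ofReal_mul (by positivity)]
    exact ENNReal.ofReal_le_ofReal (hχ.sq_alphaTilde_le hκ hT hx hback)
  have htime := setLIntegral_line_rpow_le (t := t) (r := -2⁻¹) hκ.le hT₀ hx hback (by norm_num)
    (by norm_num)
  rw [show T / (-2⁻¹ + 1) = 2 * T by ring] at htime
  calc
    _ ≤ ∫⁻ s in Icc (t - T) t,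
          K * (1 + ‖c * ν₀ * (x - (t - s) * (ξ 0 + u))‖ₑ ^ (-2⁻¹ : ℝ)) :=
      lintegral_mono fun s ↦ hinner χ hχ u c ν₀ _ ξ
    _ ≤ K * (ENNReal.ofReal T + ENNReal.ofReal (2 * T) * ‖c * ν₀ * M‖ₑ ^ (-2⁻¹ : ℝ)) := by
      rw [lintegral_const_mul _ (by fun_prop), lintegral_add_left (by fun_prop)]
      gcongr
      simp
    _ ≤ K * (ENNReal.ofReal T * a⁻¹ + ENNReal.ofReal (2 * T) * (B ^ (2⁻¹ : ℝ) * a⁻¹)) := by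
      gcongr
      exact le_mul_of_one_le_right' (hχ.one_le_inv_enorm alphaTilde_nonneg)
    _ = K * (1 + 2 * B ^ (2⁻¹ : ℝ)) * ENNReal.ofReal T * a⁻¹ := by
      rw [ENNReal.ofReal_mul zero_le_two, ENNReal.ofReal_ofNat]
      ring

lemma not_integrable_gradKernel_mul_inv_weight (C : ℝ) (hχ : IsKineticCutoff χ)
    (hξ : ξ 0 + u = 0) :
    ¬ Integrable fun ξ' ↦ gradKernel C (ξ - ξ') * (χ (alphaTilde u c ν₀ 0 ξ'))⁻¹ := by
  intro hint
  refine (hint.const_mul 2).2.ne (top_le_iff.1 ?_)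
  calc
    ⊤ = ∫⁻ ξ', ‖Real.exp (-(C + 1) * ‖ξ - ξ'‖ ^ 2) * ((ξ - ξ') 0)⁻¹‖ₑ := by
      rw [lintegral_sub_left_eq_self
        (fun η : EuclideanSpace ℝ (Fin 3) ↦ ‖Real.exp (-(C + 1) * ‖η‖ ^ 2) * (η 0)⁻¹‖ₑ) ξ,
        lintegral_gaussian_mul_inv_apply_zero_eq_top]
    _ ≤ ∫⁻ ξ', ‖2 * (gradKernel C (ξ - ξ') * (χ (alphaTilde u c ν₀ 0 ξ'))⁻¹)‖ₑ := by
      refine lintegral_mono_ae ?_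
      filter_upwards [Measure.ae_ne volume ξ] with ξ' hne
      have hkernel := exp_neg_le_gradKernel C (sub_ne_zero.2 hne.symm)
      have hweight : |((ξ - ξ') 0)⁻¹| ≤ 2 * (χ (alphaTilde u c ν₀ 0 ξ'))⁻¹ := by
        have habs : |(ξ - ξ') 0| = alphaTilde u c ν₀ 0 ξ' := by
          rw [alphaTilde_zero, ← abs_neg, PiLp.sub_apply]
          congr 1
          linear_combination -hξ
        rw [abs_inv, habs]
        exact hχ.inv_le_two_mul_inv alphaTilde_nonneg
      rw [enorm_le_iff_norm_le, Real.norm_eq_abs, abs_mul, Real.abs_exp]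
      calc
        _ ≤ gradKernel C (ξ - ξ') * (2 * (χ (alphaTilde u c ν₀ 0 ξ'))⁻¹) :=
          mul_le_mul hkernel hweight (abs_nonneg _) ((Real.exp_nonneg _).trans hkernel)
        _ ≤ _ := (mul_left_comm _ _ _).trans_le (le_abs_self _)

end Trajectory

theorem nln_large_time_general {C c ν₀ : ℝ} (hC : 0 < C) (hκ : 0 < c * ν₀) :
    ∃ C' > 0, ∀ χ, IsKineticCutoff χ → ∀ u, ∀ r ≥ 0, ∀ t T x : ℝ, 1 ≤ T → 0 ≤ x →
      ∀ ξ : EuclideanSpace ℝ (Fin 3), 0 ≤ x - T * (ξ 0 + u) →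
        ∫ s in Icc (t - T) t, Real.exp (-r * (t - s) / 2) *
            ∫ ξ', gradKernel C (ξ - ξ') *
              (χ (alphaTilde u c ν₀ (x - (t - s) * (ξ 0 + u)) ξ'))⁻¹ ≤
          C' * T / χ (alphaTilde u c ν₀ x ξ) := by
  obtain ⟨K, hK, hbound⟩ := exists_lintegral_trajectory_le hC hκ
  refine ⟨K.toReal + 1, by positivity, fun χ hχ u r hr t T x hT hx ξ hback ↦ ?_⟩
  set a := χ (alphaTilde u c ν₀ x ξ)
  have ha_nonneg : 0 ≤ a := hχ.nonneg alphaTilde_nonneg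
  rcases ha_nonneg.eq_or_lt with ha₀ | ha₀
  · -- The right-hand side is the junk value `C' * T / 0 = 0`, but the trajectory stays at the zero
    -- of the weight, where the non-integrable `ξ'`-integrand has Bochner integral `0`.
    have hα : alphaTilde u c ν₀ x ξ = 0 := (hχ.eq_zero_iff alphaTilde_nonneg).1 ha₀.symm
    have hv : ξ 0 + u = 0 := abs_nonpos_iff.1 (abs_velocity_le_alphaTilde.trans_eq hα)
    have hx₀ : x = 0 := by
      simpa [hκ.ne'] using abs_nonpos_iff.1 (abs_position_le_alphaTilde.trans_eq hα)
    simp [← ha₀, hv, hx₀, integral_undef (not_integrable_gradKernel_mul_inv_weight C hχ hv)]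
  · have hdecay (s) (hs : s ∈ Icc (t - T) t) : ‖Real.exp (-r * (t - s) / 2)‖ₑ ≤ 1 :=
      enorm_exp_le_one (by nlinarith [mul_nonneg hr (sub_nonneg.2 hs.2)])
    have hreal : K * ENNReal.ofReal T * ‖a‖ₑ⁻¹ = ENNReal.ofReal (K.toReal * T / a) := by
      rw [Real.enorm_of_nonneg ha₀.le, div_eq_mul_inv, ENNReal.ofReal_mul (by positivity),
        ENNReal.ofReal_mul (by positivity), ENNReal.ofReal_toReal hK,
        ENNReal.ofReal_inv_of_pos ha₀]
    have hle := (enorm_setIntegral_mul_integral_le measurableSet_Icc hdecay).trans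
      ((hbound χ hχ u t T x hT hx ξ hback).trans_eq hreal)
    rw [Real.enorm_eq_ofReal_abs, ENNReal.ofReal_le_ofReal_iff (by positivity)] at hle
    calc
      _ ≤ K.toReal * T / a := (le_abs_self _).trans hle
      _ ≤ (K.toReal + 1) * T / a := by
        gcongr
        exact le_add_of_nonneg_right zero_le_one

/-- large-time part of Lemma NLN, with `c = 1/8`:
for every `C > 0` there are `C' > 0` and `t₀ ≥ 1` such that for all `t ≥ t₀`,
`1 < T ≤ t`, `x ≥ 0` and `ξ` with `x − T(ξ₁+u) ≥ 0`,
`∫_{t−T}^t e^{−ν(ξ)(t−s)/2} ∫ e^{−C|ξ−ξ'|²}/|ξ−ξ'| · α(x−(t−s)(ξ₁+u),ξ')⁻¹ dξ' ds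
  ≤ C' t / α(x,ξ)`. -/
theorem nln_large_time (ν₀ u : ℝ) (hν₀ : 0 < ν₀) (hu : |u| ≤ 1/2)
    (χ χ' : ℝ → ℝ)
    (hderiv : ∀ s ≥ (0:ℝ), HasDerivAt χ (χ' s) s)
    (hcont : ContinuousOn χ' (Set.Ici (0:ℝ)))
    (hmono : ∀ s ≥ (0:ℝ), 0 ≤ χ' s)
    (hid : ∀ s : ℝ, 0 ≤ s → s ≤ 1/2 → χ s = s)
    (hone : ∀ s : ℝ, 2 ≤ s → χ s = 1)
    (hbound : ∀ s ≥ (0:ℝ), |χ' s| ≤ 1)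
    (ν : EuclideanSpace ℝ (Fin 3) → ℝ) (hνmeas : Measurable ν)
    (hνlb : ∀ ξ, ν₀ * (1 + ‖ξ‖) ≤ ν ξ) :
    ∀ C > (0:ℝ), ∃ C' > (0:ℝ), ∃ t₀ ≥ (1:ℝ), ∀ t ≥ t₀, ∀ T : ℝ, 1 < T → T ≤ t →
      ∀ x ≥ (0:ℝ), ∀ ξ : EuclideanSpace ℝ (Fin 3), 0 ≤ x - T * (ξ 0 + u) →
        (∫ s in Set.Icc (t - T) t, Real.exp (-ν ξ * (t - s) / 2) *
            ∫ ξ' : EuclideanSpace ℝ (Fin 3),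
              Real.exp (-C * ‖ξ - ξ'‖ ^ 2) / ‖ξ - ξ'‖ *
                (χ (alphaTilde u (1/8) ν₀ (x - (t - s) * (ξ 0 + u)) ξ'))⁻¹) ≤
          C' * t / χ (alphaTilde u (1/8) ν₀ x ξ) := by
  intro C hC
  have hχ := IsKineticCutoff.of_hasDerivAt hderiv hmono hid hone
  have hκ : 0 < 1 / 8 * ν₀ := by positivity
  obtain ⟨C', hC', hestimate⟩ := nln_large_time_general hC hκ
  refine ⟨C', hC', 1, le_rfl, fun t _ T hT hTt x hx ξ hback ↦ ?_⟩
  have hν : 0 ≤ ν ξ := (by positivity : 0 ≤ ν₀ * (1 + ‖ξ‖)).trans (hνlb ξ)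
  exact (hestimate χ hχ u (ν ξ) hν t T x hT.le hx ξ hback).trans
    (div_le_div_of_nonneg_right (by gcongr) (hχ.nonneg alphaTilde_nonneg))
end
end
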